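/- Let G be a group generated by a finite set S and let 𝓗 = {H_1,…,H_l} be a finite collection of stable subgroups of G. Then 𝓗 has finite width: there exists n ∈ ℕ such that every collection of pairwise distinct cosets g_1H_{σ(1)},…,g_kH_{σ(k)} (H_{σ(i)} ∈ 𝓗) with H_{σ(i)}^{g_i} ∩ H_{σ(j)}^{g_j} infinite for all i ≠ j satisfies k ≤ n. -/

import Mathlib

open Pointwise

section BasicDefs

variable {G : Type*} [Group G]

/-- The word length of `g` with respect to the generating set `S`
(words use letters from `S ∪ S⁻¹`). -/
noncomputable def wordLength (S : Set G) (g : G) : ℕ :=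
  sInf {n : ℕ | ∃ l : List G, l.length = n ∧ (∀ x ∈ l, x ∈ S ∨ x⁻¹ ∈ S) ∧ l.prod = g}

/-- The word metric on `G` with respect to the generating set `S`. -/
noncomputable def wordDist (S : Set G) (g h : G) : ℝ :=
  (wordLength S (g⁻¹ * h) : ℝ)

/-- The closed `r`-neighborhood of a subset `A` with respect to the word metric `d_S`. -/
def nbhd (S : Set G) (r : ℝ) (A : Set G) : Set G :=
  {g : G | ∃ a ∈ A, wordDist S g a ≤ r}

/-- The distance between two subsets: the infimum of distances between their elements. -/
noncomputable def setDist (S : Set G) (A B : Set G) : ℝ :=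
  sInf {r : ℝ | ∃ a ∈ A, ∃ b ∈ B, r = wordDist S a b}

/-- The conjugate subgroup `H^g = g H g⁻¹`. -/
def conjSub (g : G) (H : Subgroup G) : Subgroup G :=
  H.map (MulAut.conj g).toMonoidHom

end BasicDefs

/-- `γ` restricted to `{0, …, n}` is a `(K, ε)`-quasigeodesic for the distance function `d`. -/
def IsQuasigeodesic {α : Type*} (d : α → α → ℝ) (K ε : ℝ) (n : ℕ) (γ : ℕ → α) : Prop :=
  ∀ i j : ℕ, i ≤ n → j ≤ n →
    (1 / K) * |(i : ℝ) - (j : ℝ)| - ε ≤ d (γ i) (γ j) ∧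
      d (γ i) (γ j) ≤ K * |(i : ℝ) - (j : ℝ)| + ε

/-- `γ` restricted to `{0, …, n}` is a geodesic for the distance function `d`. -/
def IsGeodesic {α : Type*} (d : α → α → ℝ) (n : ℕ) (γ : ℕ → α) : Prop :=
  ∀ i j : ℕ, i ≤ n → j ≤ n → d (γ i) (γ j) = |(i : ℝ) - (j : ℝ)|

/-- The path `γ` (on `{0, …, n}`) is `f`-stable: every `(K, ε)`-quasigeodesic with endpoints
on `γ` stays in the `f K ε`-neighborhood of `γ`. -/
def IsStablePath {α : Type*} (d : α → α → ℝ) (f : ℝ → ℝ → ℝ) (n : ℕ) (γ : ℕ → α) : Prop :=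
  ∀ K ε : ℝ, 1 ≤ K → 0 ≤ ε → ∀ (m : ℕ) (η : ℕ → α),
    IsQuasigeodesic d K ε m η →
    (∃ i ≤ n, η 0 = γ i) → (∃ i ≤ n, η m = γ i) →
    ∀ j ≤ m, ∃ i ≤ n, d (η j) (γ i) ≤ f K ε

/-- The Gromov product `⟨x, y⟩_w` with respect to a distance function `d`. -/
noncomputable def gromovProd {α : Type*} (d : α → α → ℝ) (w x y : α) : ℝ :=
  (d w x + d w y - d x y) / 2

/-- Gromov hyperbolicity of a distance function, via the four-point condition. -/
def IsHyperbolicDist {α : Type*} (d : α → α → ℝ) : Prop :=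
  ∃ δ : ℝ, 0 ≤ δ ∧ ∀ w x y z : α,
    min (gromovProd d w x y) (gromovProd d w y z) - δ ≤ gromovProd d w x z

section GroupDefs

variable {G : Type*} [Group G]

/-- `H` is a stable subgroup of `(G, d_S)` with stability function `f`: `H` has a finite
generating set `T` such that the inclusion `(H, d_T) → (G, d_S)` is a quasi-isometric
embedding sending every `d_T`-geodesic to an `f`-stable quasigeodesic of `(G, d_S)`. -/
def IsStableSubgroupWith (S : Set G) (H : Subgroup G) (f : ℝ → ℝ → ℝ) : Prop :=
  ∃ T : Set H, T.Finite ∧ Subgroup.closure T = ⊤ ∧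
    (∃ μ c : ℝ, 1 ≤ μ ∧ 0 ≤ c ∧ ∀ h₁ h₂ : H,
      (1 / μ) * wordDist T h₁ h₂ - c ≤ wordDist S (h₁ : G) (h₂ : G) ∧
        wordDist S (h₁ : G) (h₂ : G) ≤ μ * wordDist T h₁ h₂ + c) ∧
    ∀ (n : ℕ) (γ : ℕ → H), IsGeodesic (wordDist T) n γ →
      (∃ K ε : ℝ, 1 ≤ K ∧ 0 ≤ ε ∧
        IsQuasigeodesic (wordDist S) K ε n (fun i => (γ i : G))) ∧
      IsStablePath (wordDist S) f n (fun i => (γ i : G))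

/-- `H` is a stable subgroup of `(G, d_S)`. -/
def IsStableSubgroup (S : Set G) (H : Subgroup G) : Prop :=
  ∃ f : ℝ → ℝ → ℝ, IsStableSubgroupWith S H f

/-- The family `Q` of subgroups is hyperbolically embedded in `(G, X)`:
(Q1) geometric separation, (Q2) finite generation, (Q3) uniform quasi-isometric embedding. -/
def IsHypEmbFamily {G : Type*} [Group G] {ι : Type*} (X : Set G) (Q : ι → Subgroup G) : Prop :=
  (∀ ε : ℝ, 0 < ε → ∃ R : ℝ, ∀ (g : G) (i j : ι),
      (∃ a ∈ (Q i : Set G) ∩ nbhd X ε (g • (Q j : Set G)),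
        ∃ b ∈ (Q i : Set G) ∩ nbhd X ε (g • (Q j : Set G)), R ≤ wordDist X a b) →
      i = j ∧ g ∈ Q i) ∧
  ∃ Y : ι → Set G, (∀ i, (Y i).Finite ∧ Y i ⊆ (Q i : Set G) ∧ Subgroup.closure (Y i) = Q i) ∧
    ∃ μ c : ℝ, 1 ≤ μ ∧ 0 ≤ c ∧ ∀ i : ι, ∀ h ∈ Q i,
      (wordLength (Y i) h : ℝ) ≤ μ * (wordLength X h : ℝ) + c

/-- The subset `H` of `G` satisfies the WPD condition in `(G, X)`. -/
def WPDSet (X : Set G) (H : Set G) : Prop :=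
  ∀ ε : ℝ, 0 < ε → ∃ N : ℝ, 0 < N ∧ ∀ h₁ h₂ : G, h₁ ∈ H → h₂ ∈ H →
    N < wordDist X h₁ h₂ →
    {g : G | wordDist X h₁ (g * h₁) < ε ∧ wordDist X h₂ (g * h₂) < ε}.Finite

/-- A quasimorphism on `G`. -/
def IsQuasimorphism (q : G → ℝ) : Prop :=
  ∃ D : ℝ, 0 ≤ D ∧ ∀ x y : G, |q (x * y) - q x - q y| ≤ D

/-- A homogeneous quasimorphism on `G`. -/
def IsHomogeneousQM (q : G → ℝ) : Prop :=
  IsQuasimorphism q ∧ ∀ (x : G) (n : ℕ), q (x ^ n) = (n : ℝ) * q x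

/-- `H` is a quasiconvex subgroup of `(G, d_S)`: every geodesic with endpoints in `H`
lies in a uniformly bounded neighborhood of `H`. -/
def IsQuasiconvex (S : Set G) (H : Subgroup G) : Prop :=
  ∃ C : ℝ, 0 ≤ C ∧ ∀ (n : ℕ) (γ : ℕ → G), IsGeodesic (wordDist S) n γ →
    γ 0 ∈ H → γ n ∈ H → ∀ i ≤ n, ∃ h ∈ H, wordDist S (γ i) h ≤ C

end GroupDefs

/-!
In a tree, pairwise intersecting subtrees have a common point: project a base vertex `b` to each
subtree, and the projection farthest from `b` lies in all of them. The proof is a coarse version of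
this argument. A geodesic to a nearest point of a quasiconvex set followed by a geodesic along the
set is a `(3, ε)`-quasigeodesic, so stability keeps nearest-point projections uniformly close to any
other stable set involved, and cosets of stable subgroups that are pairwise uniformly close all meet
one ball of uniform radius. An infinite intersection of conjugates says that two cosets fellow-travel
along an unbounded set, at a distance which is not controlled; stability replaces it by a uniform
one. Finally, a ball is finite and meets only finitely many cosets.
-/

section Paths

variable {X : Type*} {m : ℕ} {α β : ℕ → X}

/-- The concatenation of the restriction of `α` to `{0, …, m}` with `β`, for paths with
`α m = β 0`. -/
def concatPath (m : ℕ) (α β : ℕ → X) (i : ℕ) : X :=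
  if i ≤ m then α i else β (i - m)

lemma concatPath_of_le {i : ℕ} (h : i ≤ m) : concatPath m α β i = α i :=
  if_pos h

lemma concatPath_add (h : α m = β 0) (j : ℕ) : concatPath m α β (m + j) = β j := by
  rcases j.eq_zero_or_pos with rfl | hj
  · simp [concatPath, h]
  · simp [concatPath, hj.ne']

variable [PseudoMetricSpace X] {K ε D : ℝ} {n : ℕ} {γ η : ℕ → X}

lemma IsGeodesic.dist_eq (hγ : IsGeodesic dist n γ) {i j : ℕ} (hij : i ≤ j) (hj : j ≤ n) :
    dist (γ i) (γ j) = (j : ℝ) - i := by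
  rw [hγ i j (hij.trans hj) hj, abs_sub_comm, abs_of_nonneg (by simpa using hij)]

lemma isGeodesic_of_le (h : ∀ i j : ℕ, i ≤ j → j ≤ n → dist (γ i) (γ j) = (j : ℝ) - i) :
    IsGeodesic dist n γ := by
  intro i j hi hj
  rcases le_total i j with hij | hij
  · rw [h i j hij hj, abs_sub_comm, abs_of_nonneg (by simpa using hij)]
  · rw [dist_comm, h j i hij hi, abs_of_nonneg (by simpa using hij)]

lemma isQuasigeodesic_of_le
    (h : ∀ i j : ℕ, i ≤ j → j ≤ n → 1 / K * ((j : ℝ) - i) - ε ≤ dist (η i) (η j) ∧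
      dist (η i) (η j) ≤ K * ((j : ℝ) - i) + ε) :
    IsQuasigeodesic dist K ε n η := by
  intro i j hi hj
  rcases le_total i j with hij | hij
  · rw [abs_sub_comm, abs_of_nonneg (by simpa using hij)]
    exact h i j hij hj
  · rw [dist_comm, abs_of_nonneg (by simpa using hij)]
    exact h j i hij hi

lemma IsQuasigeodesic.le_of_le (hη : IsQuasigeodesic dist K ε n η) {i j : ℕ} (hij : i ≤ j)
    (hj : j ≤ n) :
    1 / K * ((j : ℝ) - i) - ε ≤ dist (η i) (η j) ∧
      dist (η i) (η j) ≤ K * ((j : ℝ) - i) + ε := by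
  simpa only [abs_sub_comm (i : ℝ), abs_of_nonneg (sub_nonneg.2 (Nat.cast_le (α := ℝ).2 hij))]
    using hη i j (hij.trans hj) hj

lemma IsGeodesic.isQuasigeodesic (hγ : IsGeodesic dist n γ) (hK : 1 ≤ K) (hε : 0 ≤ ε) :
    IsQuasigeodesic dist K ε n γ := by
  intro i j hi hj
  rw [hγ i j hi hj]
  have hinv : 1 / K ≤ 1 := by rw [one_div]; exact inv_le_one_of_one_le₀ hK
  have habs := abs_nonneg ((i : ℝ) - j)
  exact ⟨by nlinarith, by nlinarith⟩

lemma IsGeodesic.drop (hγ : IsGeodesic dist n γ) {t : ℕ} (ht : t ≤ n) :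
    IsGeodesic dist (n - t) (fun i => γ (t + i)) := by
  intro i j hi hj
  rw [hγ (t + i) (t + j) (by lia) (by lia)]
  push_cast
  congr 1
  ring

lemma isGeodesic_of_dist_succ_le_one (hstep : ∀ i < n, dist (γ i) (γ (i + 1)) ≤ 1)
    (hn : dist (γ 0) (γ n) = n) : IsGeodesic dist n γ := by
  have hle : ∀ i j : ℕ, i ≤ j → j ≤ n → dist (γ i) (γ j) ≤ (j : ℝ) - i := by
    intro i j hij hj
    have h := dist_le_Ico_sum_of_dist_le hij fun {k} _ hk => hstep k (hk.trans_le hj)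
    simpa [Nat.cast_sub hij] using h
  refine isGeodesic_of_le fun i j hij hj => (hle i j hij hj).antisymm ?_
  have h0 := hle 0 i i.zero_le (hij.trans hj)
  have hn' := hle j n hj le_rfl
  have htri := dist_triangle4 (γ 0) (γ i) (γ j) (γ n)
  push_cast at h0
  linarith

lemma IsQuasigeodesic.of_dist_le (hη : IsQuasigeodesic dist K ε n η)
    (h : ∀ i ≤ n, dist (η i) (γ i) ≤ D) : IsQuasigeodesic dist K (ε + 2 * D) n γ := by
  intro i j hi hj
  obtain ⟨hlow, hupp⟩ := hη i j hi hj
  have hdiff : |dist (η i) (η j) - dist (γ i) (γ j)| ≤ D + D :=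
    (dist_dist_dist_le _ _ _ _).trans (add_le_add (h i hi) (h j hj))
  obtain ⟨hl, hu⟩ := abs_le.1 hdiff
  exact ⟨by linarith, by linarith⟩

lemma IsQuasigeodesic.concat (hα : IsQuasigeodesic dist K ε m α)
    (hβ : IsQuasigeodesic dist K ε n β) (hε : 0 ≤ ε) (h : α m = β 0)
    (hαβ : ∀ i ≤ m, ∀ j ≤ n, 1 / K * ((m : ℝ) - i + j) - 2 * ε ≤ dist (α i) (β j)) :
    IsQuasigeodesic dist K (2 * ε) (m + n) (concatPath m α β) := by
  refine isQuasigeodesic_of_le fun i j hij hj => ?_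
  rcases le_total j m with hjm | hjm
  · rw [concatPath_of_le (hij.trans hjm), concatPath_of_le hjm]
    have hα := hα.le_of_le hij hjm
    exact ⟨by linarith, by linarith⟩
  obtain ⟨j, rfl⟩ := Nat.exists_eq_add_of_le hjm
  rw [concatPath_add h]
  rcases le_total i m with him | him
  · rw [concatPath_of_le him]
    have hlow := hαβ i him j (by lia)
    have hα := (hα.le_of_le him le_rfl).2
    have hβ := (hβ.le_of_le j.zero_le (by lia)).2
    have htri := dist_triangle (α i) (α m) (β j)
    rw [← h] at hβ
    push_cast at hβ ⊢
    exact ⟨by convert hlow using 3; ring, by linarith⟩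
  · obtain ⟨i, rfl⟩ := Nat.exists_eq_add_of_le him
    rw [concatPath_add h]
    have hβ := hβ.le_of_le (i := i) (j := j) (by lia) (by lia)
    push_cast
    rw [add_sub_add_left_eq_sub]
    exact ⟨by linarith, by linarith⟩

end Paths

section StablePaths

variable {X : Type*} [PseudoMetricSpace X] {f : ℝ → ℝ → ℝ} {K ε r D : ℝ} {m n : ℕ}
  {α γ η : ℕ → X}

lemma IsStablePath.exists_dist_le (hγ : IsStablePath dist f n γ) (hK : 1 ≤ K) (hε : 0 ≤ ε)
    (hη : IsQuasigeodesic dist K ε m η) (h0 : ∃ i ≤ n, dist (η 0) (γ i) ≤ D)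
    (hm : ∃ i ≤ n, dist (η m) (γ i) ≤ D) {j : ℕ} (hj : j ≤ m) :
    ∃ i ≤ n, dist (η j) (γ i) ≤ D + f K (ε + 2 * D) := by
  obtain ⟨i₀, hi₀, h0⟩ := h0
  obtain ⟨i₁, hi₁, hm⟩ := hm
  have hD : 0 ≤ D := dist_nonneg.trans h0
  let η' := Function.update (Function.update η m (γ i₁)) 0 (γ i₀)
  have hclose : ∀ i, dist (η i) (η' i) ≤ D := by
    intro i
    by_cases hi : i = 0
    · simpa [η', hi] using h0
    by_cases him : i = m
    · subst him
      simpa [η', hi] using hm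
    · simpa [η', hi, him] using hD
  have h0' : ∃ i ≤ n, η' 0 = γ i := ⟨i₀, hi₀, by simp [η']⟩
  have hm' : ∃ i ≤ n, η' m = γ i := by
    by_cases hm0 : m = 0
    · exact hm0 ▸ h0'
    · exact ⟨i₁, hi₁, by simp [η', hm0]⟩
  obtain ⟨i, hi, hji⟩ := hγ K (ε + 2 * D) hK (by positivity) m η'
    (hη.of_dist_le fun i _ => hclose i) h0' hm' j hj
  exact ⟨i, hi, (dist_triangle _ _ _).trans (add_le_add (hclose j) hji)⟩

lemma IsStablePath.nonneg (hγ : IsStablePath dist f n γ) (hK : 1 ≤ K) (hε : 0 ≤ ε) :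
    0 ≤ f K ε := by
  have hconst : IsQuasigeodesic dist K ε 0 fun _ => γ 0 :=
    IsGeodesic.isQuasigeodesic (by simp [IsGeodesic]) hK hε
  obtain ⟨i, -, hi⟩ := hγ K ε hK hε 0 _ hconst ⟨0, n.zero_le, rfl⟩ ⟨0, n.zero_le, rfl⟩ 0 le_rfl
  exact dist_nonneg.trans hi

lemma IsStablePath.of_close (hγ : IsStablePath dist f n γ)
    (hαγ : ∀ j ≤ m, ∃ i ≤ n, dist (α j) (γ i) ≤ r)
    (hγα : ∀ i ≤ n, ∃ j ≤ m, dist (γ i) (α j) ≤ D) :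
    IsStablePath dist (fun K ε => r + f K (ε + 2 * r) + D) m α := by
  rintro K ε hK hε k η hη ⟨i₀, hi₀, h0⟩ ⟨i₁, hi₁, hk⟩ j hj
  obtain ⟨i, hi, hji⟩ :=
    hγ.exists_dist_le hK hε hη (h0 ▸ hαγ i₀ hi₀) (hk ▸ hαγ i₁ hi₁) hj
  obtain ⟨t, ht, hit⟩ := hγα i hi
  exact ⟨t, ht, (dist_triangle _ _ _).trans (add_le_add hji hit)⟩

/-- Consecutive points of `α` are close to points of `γ` whose parameters differ by a bounded
amount, so the parameters occurring in this way leave no large gaps in `{0, …, n}`. -/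
lemma IsQuasigeodesic.exists_dist_geodesic_le (hK : 0 < K) (hγ : IsQuasigeodesic dist K ε n γ)
    (hα : IsGeodesic dist m α) (h0 : α 0 = γ 0) (hm : α m = γ n)
    (hαγ : ∀ j ≤ m, ∃ i ≤ n, dist (α j) (γ i) ≤ r) {i : ℕ} (hi : i ≤ n) :
    ∃ j ≤ m, dist (γ i) (α j) ≤ K * (K * (2 * r + 1 + ε)) + ε + r := by
  have hr : 0 ≤ r := let ⟨_, _, h⟩ := hαγ 0 m.zero_le; dist_nonneg.trans h
  let IsBefore (j : ℕ) : Prop := ∃ t ≤ i, dist (α j) (γ t) ≤ r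
  have hzero : IsBefore 0 := ⟨0, i.zero_le, by simpa [h0] using hr⟩
  obtain ⟨j, hj, hlast⟩ := Nat.exists_not_and_succ_of_not_zero_of_exists
    (p := fun j => m < j ∨ ¬ IsBefore j) (by simpa using hzero) ⟨m + 1, Or.inl m.lt_succ_self⟩
  simp only [not_or, not_lt, not_not] at hj
  obtain ⟨hjm, t, hti, ht⟩ := hj
  obtain ⟨t', hit', ht'n, ht'⟩ : ∃ t', i ≤ t' ∧ t' ≤ n ∧ dist (α j) (γ t') ≤ r + 1 := by
    rcases hjm.eq_or_lt with rfl | hjm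
    · exact ⟨n, hi, le_rfl, by rw [hm, dist_self]; linarith⟩
    obtain ⟨t', ht'n, ht'⟩ := hαγ (j + 1) hjm
    refine ⟨t', ?_, ht'n, ?_⟩
    · by_contra! hlt
      exact hlast.elim (by lia) fun h => h ⟨t', hlt.le, ht'⟩
    · have hstep := hα.dist_eq j.le_succ hjm
      have htri := dist_triangle (α j) (α (j + 1)) (γ t')
      push_cast at hstep
      linarith
  have hgap : (t' : ℝ) - t ≤ K * (2 * r + 1 + ε) := by
    have hlow := (hγ.le_of_le (hti.trans hit') ht'n).1
    have htri := dist_triangle_left (γ t) (γ t') (α j)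
    rw [← div_le_iff₀' hK]
    linarith [one_div_mul_eq_div K ((t' : ℝ) - t)]
  have hit : K * ((i : ℝ) - t) ≤ K * (K * (2 * r + 1 + ε)) := by
    have : (i : ℝ) ≤ t' := by exact_mod_cast hit'
    gcongr
    linarith
  have hup := (hγ.le_of_le hti hi).2
  have htri := dist_triangle_left (γ i) (α j) (γ t)
  rw [dist_comm (γ t) (α j)] at htri
  exact ⟨j, hjm, by linarith⟩

end StablePaths

section StableSets

/-- `A` is `r`-quasiconvex for the distance function `d`: geodesics between points of `A` stay in
the `r`-neighborhood of `A`. -/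
def IsQuasiconvexSet {X : Type*} (d : X → X → ℝ) (r : ℝ) (A : Set X) : Prop :=
  ∀ (n : ℕ) (γ : ℕ → X), IsGeodesic d n γ → γ 0 ∈ A → γ n ∈ A → ∀ i ≤ n, ∃ a ∈ A, d (γ i) a ≤ r

/-- `A` is a stable subset for the distance function `d`, with constants `r` and `F`. Unlike in
`IsStableSubgroupWith`, stability is required of geodesics of the ambient space, which makes the
notion independent of any intrinsic metric on `A`. -/
structure IsStableSet {X : Type*} (d : X → X → ℝ) (r : ℝ) (F : ℝ → ℝ → ℝ) (A : Set X) : Prop where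
  isQuasiconvexSet : IsQuasiconvexSet d r A
  isStablePath : ∀ (n : ℕ) (γ : ℕ → X), IsGeodesic d n γ → γ 0 ∈ A → γ n ∈ A →
    IsStablePath d F n γ

/-- Any two points are joined by a discrete geodesic; in particular distances are integers, as in
the vertex set of a connected graph. -/
class DiscreteGeodesicSpace (X : Type*) [PseudoMetricSpace X] : Prop where
  exists_isGeodesic (x y : X) : ∃ (n : ℕ) (γ : ℕ → X), IsGeodesic dist n γ ∧ γ 0 = x ∧ γ n = y

open DiscreteGeodesicSpace (exists_isGeodesic)

lemma IsStableSet.mono {X : Type*} {d : X → X → ℝ} {r r' : ℝ} {F F' : ℝ → ℝ → ℝ} {A : Set X}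
    (hA : IsStableSet d r F A) (hr : r ≤ r') (hF : ∀ K ε, F K ε ≤ F' K ε) :
    IsStableSet d r' F' A where
  isQuasiconvexSet n γ hγ h0 hn i hi :=
    let ⟨a, ha, hia⟩ := hA.isQuasiconvexSet n γ hγ h0 hn i hi
    ⟨a, ha, hia.trans hr⟩
  isStablePath n γ hγ h0 hn K ε hK hε m η hη hη0 hηm j hj :=
    let ⟨i, hi, hji⟩ := hA.isStablePath n γ hγ h0 hn K ε hK hε m η hη hη0 hηm j hj
    ⟨i, hi, hji.trans (hF K ε)⟩

lemma IsStableSet.smul {M X : Type*} [Group M] [MulAction M X] {d : X → X → ℝ}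
    (hd : ∀ (g : M) (x y : X), d (g • x) (g • y) = d x y) {r : ℝ} {F : ℝ → ℝ → ℝ} {A : Set X}
    (hA : IsStableSet d r F A) (g : M) : IsStableSet d r F (g • A) := by
  have hd' : ∀ x y, d (g⁻¹ • x) y = d x (g • y) := fun x y => by rw [← hd g, smul_inv_smul]
  have hgeod : ∀ {n γ}, IsGeodesic d n γ → IsGeodesic d n fun i => g⁻¹ • γ i := fun hγ i j hi hj =>
    (hd _ _ _).trans (hγ i j hi hj)
  constructor
  · intro n γ hγ h0 hn i hi
    rw [Set.mem_smul_set_iff_inv_smul_mem] at h0 hn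
    obtain ⟨a, ha, hia⟩ := hA.isQuasiconvexSet n _ (hgeod hγ) h0 hn i hi
    exact ⟨g • a, Set.smul_mem_smul_set ha, by rwa [← hd']⟩
  · intro n γ hγ h0 hn
    rw [Set.mem_smul_set_iff_inv_smul_mem] at h0 hn
    rintro K ε hK hε m η hη ⟨i₀, hi₀, hη0⟩ ⟨i₁, hi₁, hηm⟩ j hj
    obtain ⟨i, hi, hji⟩ := hA.isStablePath n _ (hgeod hγ) h0 hn K ε hK hε m (fun i => g⁻¹ • η i)
      (fun i j hi hj => by simpa only [hd] using hη i j hi hj)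
      ⟨i₀, hi₀, by rw [hη0]⟩ ⟨i₁, hi₁, by rw [hηm]⟩ j hj
    exact ⟨i, hi, by rwa [hd] at hji⟩

variable {X : Type*} [PseudoMetricSpace X] {r K ε D : ℝ} {F : ℝ → ℝ → ℝ} {A : Set X}

lemma isStableSet_of_forall_exists_isStablePath (hK : 0 < K)
    (hA : ∀ a ∈ A, ∀ b ∈ A, ∃ (n : ℕ) (γ : ℕ → X), γ 0 = a ∧ γ n = b ∧ (∀ i ≤ n, γ i ∈ A) ∧
      IsQuasigeodesic dist K ε n γ ∧ IsStablePath dist F n γ) :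
    IsStableSet dist (F 1 0)
      (fun K' ε' => F 1 0 + F K' (ε' + 2 * F 1 0) + (K * (K * (2 * F 1 0 + 1 + ε)) + ε + F 1 0))
      A := by
  have hclose : ∀ {m : ℕ} {α : ℕ → X} {n : ℕ} {γ : ℕ → X}, IsGeodesic dist m α →
      IsStablePath dist F n γ → γ 0 = α 0 → γ n = α m → ∀ j ≤ m, ∃ i ≤ n,
        dist (α j) (γ i) ≤ F 1 0 := fun hα hst h0 hn =>
    hst 1 0 le_rfl le_rfl _ _ (hα.isQuasigeodesic le_rfl le_rfl) ⟨0, Nat.zero_le _, h0.symm⟩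
      ⟨_, le_rfl, hn.symm⟩
  constructor
  · intro m α hα h0 hm j hj
    obtain ⟨n, γ, hγ0, hγn, hγA, -, hst⟩ := hA _ h0 _ hm
    obtain ⟨i, hi, hji⟩ := hclose hα hst hγ0 hγn j hj
    exact ⟨γ i, hγA i hi, hji⟩
  · intro m α hα h0 hm
    obtain ⟨n, γ, hγ0, hγn, -, hγ, hst⟩ := hA _ h0 _ hm
    have hαγ := hclose hα hst hγ0 hγn
    exact hst.of_close hαγ fun i hi =>
      hγ.exists_dist_geodesic_le hK hα hγ0.symm hγn.symm hαγ hi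

lemma IsStableSet.radius_nonneg (hA : IsStableSet dist r F A) (hne : A.Nonempty) : 0 ≤ r := by
  obtain ⟨a, ha⟩ := hne
  obtain ⟨b, -, hb⟩ := hA.isQuasiconvexSet 0 (fun _ => a) (by simp [IsGeodesic]) ha ha 0 le_rfl
  exact dist_nonneg.trans hb

lemma IsStableSet.nonneg (hA : IsStableSet dist r F A) (hne : A.Nonempty) (hK : 1 ≤ K)
    (hε : 0 ≤ ε) : 0 ≤ F K ε := by
  obtain ⟨a, ha⟩ := hne
  exact (hA.isStablePath 0 (fun _ => a) (by simp [IsGeodesic]) ha ha).nonneg hK hε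

lemma IsStableSet.exists_dist_le [DiscreteGeodesicSpace X] (hA : IsStableSet dist r F A)
    (hK : 1 ≤ K) (hε : 0 ≤ ε) {m : ℕ} {η : ℕ → X} (hη : IsQuasigeodesic dist K ε m η)
    (h0 : ∃ a ∈ A, dist (η 0) a ≤ D) (hm : ∃ a ∈ A, dist (η m) a ≤ D) {j : ℕ} (hj : j ≤ m) :
    ∃ a ∈ A, dist (η j) a ≤ D + F K (ε + 2 * D) + r := by
  obtain ⟨a, ha, h0⟩ := h0
  obtain ⟨b, hb, hm⟩ := hm
  obtain ⟨n, γ, hγ, rfl, rfl⟩ := exists_isGeodesic a b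
  obtain ⟨i, hi, hji⟩ := (hA.isStablePath n γ hγ ha hb).exists_dist_le hK hε hη
    ⟨0, n.zero_le, h0⟩ ⟨n, le_rfl, hm⟩ hj
  obtain ⟨c, hc, hic⟩ := hA.isQuasiconvexSet n γ hγ ha hb i hi
  exact ⟨c, hc, (dist_triangle _ _ _).trans (add_le_add hji hic)⟩

end StableSets

section Projections

open DiscreteGeodesicSpace (exists_isGeodesic)

variable {X : Type*} [PseudoMetricSpace X] {r D ρ : ℝ} {F : ℝ → ℝ → ℝ} {A B : Set X}

/-- The radius `D + F 3 (2 * r + 2 * D) + r` of `IsStableSet.exists_dist_le` for the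
`(3, 2 * r)`-quasigeodesics through nearest-point projections. -/
def projRadius (r : ℝ) (F : ℝ → ℝ → ℝ) (D : ℝ) : ℝ :=
  D + F 3 (2 * r + 2 * D) + r

lemma IsStableSet.le_projRadius (hA : IsStableSet dist r F A) (hne : A.Nonempty) (hD : 0 ≤ D) :
    D ≤ projRadius r F D := by
  have hr := hA.radius_nonneg hne
  have hF := hA.nonneg hne (K := 3) (ε := 2 * r + 2 * D) (by norm_num) (by positivity)
  unfold projRadius
  linarith

lemma exists_isMinOn_dist [DiscreteGeodesicSpace X] (p : X) (hA : A.Nonempty) :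
    ∃ q ∈ A, IsMinOn (dist p) A q := by
  have hint : ∀ q, ∃ n : ℕ, dist p q = n := by
    intro q
    obtain ⟨n, γ, hγ, rfl, rfl⟩ := exists_isGeodesic p q
    exact ⟨n, by simpa using hγ.dist_eq n.zero_le le_rfl⟩
  choose len hlen using hint
  refine ⟨_, Function.argminOn_mem len A hA, fun a ha => ?_⟩
  simpa only [Set.mem_ofPred_eq, hlen, Nat.cast_le] using Function.argminOn_le len A ha

lemma dist_add_dist_le_of_isMinOn {p q x z a : X} (hq : IsMinOn (dist p) A q)
    (hx : dist p x + dist x q ≤ dist p q) (ha : a ∈ A) (hz : dist z a ≤ r) :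
    dist x q + dist q z ≤ 3 * dist x z + 2 * r := by
  have hpa : dist p q ≤ dist p a := hq ha
  have hxa := dist_triangle p x a
  have hza := dist_triangle x z a
  have hqz := dist_triangle_left q z x
  linarith

variable {k m n : ℕ} {α β γ : ℕ → X}

lemma IsGeodesic.isQuasigeodesic_concat_of_isMinOn (hα : IsGeodesic dist m α)
    (hγ : IsGeodesic dist n γ) (h : α m = γ 0) (hmin : IsMinOn (dist (α 0)) A (γ 0))
    (hγA : ∀ j ≤ n, ∃ a ∈ A, dist (γ j) a ≤ r) :
    IsQuasigeodesic dist 3 (2 * r) (m + n) (concatPath m α γ) := by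
  have hr : 0 ≤ r := let ⟨_, _, ha⟩ := hγA 0 n.zero_le; dist_nonneg.trans ha
  refine (hα.isQuasigeodesic (by norm_num) hr).concat (hγ.isQuasigeodesic (by norm_num) hr) hr h
    fun i hi j hj => ?_
  obtain ⟨a, ha, hja⟩ := hγA j hj
  have h0i := hα.dist_eq i.zero_le hi
  have him := hα.dist_eq hi le_rfl
  have h0m := hα.dist_eq m.zero_le le_rfl
  have h0j := hγ.dist_eq j.zero_le hj
  have hle := dist_add_dist_le_of_isMinOn (x := α i) hmin (by rw [← h]; linarith) ha hja
  rw [← h] at hle h0j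
  push_cast at h0j
  linarith

lemma IsGeodesic.isQuasigeodesic_concat_concat_of_isMinOn (hα : IsGeodesic dist m α)
    (hγ : IsGeodesic dist n γ) (hβ : IsGeodesic dist k β) (hαγ : α m = γ 0) (hγβ : γ n = β 0)
    (hα_min : IsMinOn (dist (α 0)) A (γ 0)) (hβ_min : IsMinOn (dist (β k)) A (γ n))
    (hγA : ∀ j ≤ n, ∃ a ∈ A, dist (γ j) a ≤ r) (hlong : 2 * (m + k) ≤ n) :
    IsQuasigeodesic dist 3 (4 * r) (m + n + k) (concatPath (m + n) (concatPath m α γ) β) := by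
  have hr : 0 ≤ r := let ⟨_, _, ha⟩ := hγA 0 n.zero_le; dist_nonneg.trans ha
  have hη := hα.isQuasigeodesic_concat_of_isMinOn hγ hαγ hα_min hγA
  rw [show 4 * r = 2 * (2 * r) by ring]
  refine hη.concat (hβ.isQuasigeodesic (by norm_num) (by positivity)) (by positivity)
    (by rw [concatPath_add hαγ, hγβ]) fun i hi j hj => ?_
  have h0j := hβ.dist_eq j.zero_le hj
  push_cast at h0j ⊢
  rcases le_total i m with him | him
  · rw [concatPath_of_le him]
    have him' := hα.dist_eq him le_rfl
    have h0n := hγ.dist_eq n.zero_le le_rfl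
    have hlong' : 2 * ((m : ℝ) + k) ≤ n := by exact_mod_cast hlong
    have hjk : (j : ℝ) ≤ k := by exact_mod_cast hj
    have hi0 : (0 : ℝ) ≤ i := i.cast_nonneg
    have htri := dist_triangle4 (α m) (α i) (β j) (β 0)
    rw [dist_comm (α m) (α i), dist_comm (β j) (β 0)] at htri
    rw [← hαγ, hγβ] at h0n
    push_cast at h0n
    linarith
  · obtain ⟨i, rfl⟩ := Nat.exists_eq_add_of_le him
    rw [concatPath_add hαγ]
    obtain ⟨a, ha, hia⟩ := hγA i (by lia)
    have hin := hγ.dist_eq (i := i) (j := n) (by lia) le_rfl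
    have hjk := hβ.dist_eq hj le_rfl
    have h0k := hβ.dist_eq k.zero_le le_rfl
    have hle := dist_add_dist_le_of_isMinOn (x := β j) hβ_min
      (by
        rw [hγβ, dist_comm (β k) (β j), dist_comm (β j) (β 0), dist_comm (β k) (β 0)]
        push_cast at h0k
        linarith)
      ha hia
    rw [dist_comm (γ n) (γ i), dist_comm (β j) (γ i), hγβ, dist_comm (β j) (β 0)] at hle
    rw [hγβ] at hin
    push_cast
    linarith

variable [DiscreteGeodesicSpace X]

lemma IsQuasiconvexSet.exists_isQuasigeodesic_of_isMinOn (hA : IsQuasiconvexSet dist r A)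
    {p q a : X} (hqA : q ∈ A) (hq : IsMinOn (dist p) A q) (ha : a ∈ A) :
    ∃ (m : ℕ) (η : ℕ → X), IsQuasigeodesic dist 3 (2 * r) m η ∧ η 0 = p ∧ η m = a ∧
      ∃ j ≤ m, η j = q := by
  obtain ⟨m, α, hα, rfl, rfl⟩ := exists_isGeodesic p q
  obtain ⟨n, γ, hγ, hγ0, rfl⟩ := exists_isGeodesic (α m) a
  rw [← hγ0] at hqA hq
  exact ⟨m + n, concatPath m α γ,
    hα.isQuasigeodesic_concat_of_isMinOn hγ hγ0.symm hq (hA n γ hγ hqA ha),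
    concatPath_of_le m.zero_le, concatPath_add hγ0.symm n,
    m, Nat.le_add_right m n, concatPath_of_le le_rfl⟩

lemma IsStableSet.exists_dist_le_projRadius (hB : IsStableSet dist r F B)
    (hA : IsQuasiconvexSet dist r A) (hAB : ∃ a ∈ A, ∃ b ∈ B, dist a b ≤ D) {p q : X}
    (hp : ∃ b ∈ B, dist p b ≤ D) (hqA : q ∈ A) (hq : IsMinOn (dist p) A q) :
    ∃ b ∈ B, dist q b ≤ projRadius r F D := by
  obtain ⟨a, ha, haB⟩ := hAB
  have hr := hB.radius_nonneg (hp.imp fun _ h => h.1)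
  obtain ⟨m, η, hη, rfl, rfl, j, hj, rfl⟩ := hA.exists_isQuasigeodesic_of_isMinOn hqA hq ha
  exact hB.exists_dist_le (by norm_num) (by positivity) hη hp haB hj

lemma IsStableSet.exists_dist_le_of_not_isBounded (hA : IsStableSet dist r F A)
    (hB : IsQuasiconvexSet dist r B)
    (hAB : ¬ Bornology.IsBounded {a ∈ A | ∃ b ∈ B, dist a b ≤ ρ}) :
    ∃ a ∈ A, ∃ b ∈ B, dist a b ≤ F 3 (4 * r) + r := by
  simp only [Metric.isBounded_iff, not_exists, not_forall, not_le] at hAB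
  obtain ⟨a, ⟨ha, b, hb, hab⟩, a', ⟨ha', b', hb', hab'⟩, hfar⟩ := hAB (6 * ρ)
  have hr := hA.radius_nonneg ⟨a, ha⟩
  obtain ⟨q, hq, hq_min⟩ := exists_isMinOn_dist a ⟨b, hb⟩
  obtain ⟨q', hq', hq'_min⟩ := exists_isMinOn_dist a' ⟨b, hb⟩
  obtain ⟨m, α, hα, rfl, rfl⟩ := exists_isGeodesic a q
  obtain ⟨k, β, hβ, rfl, rfl⟩ := exists_isGeodesic q' a'
  obtain ⟨n, γ, hγ, hγ0, hγn⟩ := exists_isGeodesic (α m) (β 0)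
  have hlong : 2 * (m + k) ≤ n := by
    have hm := hα.dist_eq m.zero_le le_rfl
    have hk := hβ.dist_eq k.zero_le le_rfl
    have hn := hγ.dist_eq n.zero_le le_rfl
    have hmρ : dist (α 0) (α m) ≤ ρ := (hq_min hb).trans hab
    have hkρ : dist (β k) (β 0) ≤ ρ := (hq'_min hb').trans hab'
    have htri := dist_triangle4 (α 0) (α m) (β 0) (β k)
    rw [hγ0, hγn] at hn
    rw [dist_comm] at hkρ
    push_cast at hm hk hn
    exact_mod_cast (by linarith : 2 * ((m : ℝ) + k) ≤ n)
  rw [← hγ0] at hq hq_min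
  rw [← hγn] at hq' hq'_min
  have hη := hα.isQuasigeodesic_concat_concat_of_isMinOn hγ hβ hγ0.symm hγn hq_min hq'_min
    (hB n γ hγ hq hq') hlong
  have hcat : concatPath m α γ (m + n) = β 0 := by rw [concatPath_add hγ0.symm, hγn]
  obtain ⟨c, hc, hqc⟩ := hA.exists_dist_le (D := 0) (j := m) (by norm_num) (by positivity) hη
    ⟨α 0, ha, by simp [concatPath_of_le]⟩ ⟨β k, ha', by simp [concatPath_add hcat]⟩ (by lia)
  rw [concatPath_of_le (by lia), concatPath_of_le le_rfl, ← hγ0] at hqc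
  exact ⟨c, hc, γ 0, hq, by simpa [dist_comm] using hqc⟩

end Projections

section CoarseHelly

open DiscreteGeodesicSpace (exists_isGeodesic)

variable {X : Type*} [PseudoMetricSpace X] [DiscreteGeodesicSpace X] {r R D : ℝ}
  {F : ℝ → ℝ → ℝ} {A B : Set X}

lemma IsStablePath.exists_dist_le_projRadius {n : ℕ} {γ : ℕ → X} (hγ : IsStablePath dist F n γ)
    (hA : IsQuasiconvexSet dist r A) (hr : 0 ≤ r) {q a : X} (hqA : q ∈ A)
    (hq : IsMinOn (dist (γ 0)) A q) (ha : a ∈ A) (haD : dist a (γ n) ≤ D) :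
    ∃ t ≤ n, dist q (γ t) ≤ projRadius r F D := by
  obtain ⟨m, η, hη, h0, rfl, j, hj, rfl⟩ := hA.exists_isQuasigeodesic_of_isMinOn hqA hq ha
  obtain ⟨t, ht, hjt⟩ := hγ.exists_dist_le (by norm_num) (by positivity) hη
    ⟨0, n.zero_le, by rw [h0, dist_self]; exact dist_nonneg.trans haD⟩ ⟨n, le_rfl, haD⟩ hj
  exact ⟨t, ht, hjt.trans (le_add_of_nonneg_right hr)⟩

/-- If the projection `q'` to `B` is farther from the start of `γ` than the projection `q` to `A`,
then `q'` is close to the part of `γ` that fellow-travels `A`. -/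
lemma IsStableSet.exists_dist_le_of_dist_le {n : ℕ} {γ : ℕ → X} (hA : IsStableSet dist r F A)
    (hB : IsQuasiconvexSet dist r B) (hγ : IsGeodesic dist n γ) (hγF : IsStablePath dist F n γ)
    {q q' a b : X} (hqA : q ∈ A) (hq : IsMinOn (dist (γ 0)) A q) (hq'B : q' ∈ B)
    (hq' : IsMinOn (dist (γ 0)) B q') (hqq' : dist (γ 0) q ≤ dist (γ 0) q')
    (ha : a ∈ A) (haD : dist a (γ n) ≤ D) (hb : b ∈ B) (hbD : dist b (γ n) ≤ D) :
    ∃ c ∈ A, dist q' c ≤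
      4 * projRadius r F D + F 1 (2 * projRadius r F D) + r := by
  have hr := hA.radius_nonneg ⟨q, hqA⟩
  have hDE := hA.le_projRadius ⟨q, hqA⟩ (dist_nonneg.trans haD)
  obtain ⟨t, ht, hqt⟩ := hγF.exists_dist_le_projRadius hA.isQuasiconvexSet hr hqA hq ha haD
  obtain ⟨t', ht', hq't'⟩ := hγF.exists_dist_le_projRadius hB hr hq'B hq' hb hbD
  set E := projRadius r F D
  have hparam : (t : ℝ) ≤ t' + 2 * E := by
    have h0t := hγ.dist_eq t.zero_le ht
    have h0t' := hγ.dist_eq t'.zero_le ht'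
    have htri := dist_triangle (γ 0) q (γ t)
    have htri' := dist_triangle_right (γ 0) q' (γ t')
    push_cast at h0t h0t'
    linarith
  obtain ⟨s, hts, hsn, hs⟩ : ∃ s, t ≤ s ∧ s ≤ n ∧ dist (γ t') (γ s) ≤ 2 * E := by
    rcases le_total t t' with hle | hle
    · exact ⟨t', hle, ht', by rw [dist_self]; linarith [dist_nonneg.trans hqt]⟩
    · exact ⟨t, le_rfl, ht, by rw [hγ.dist_eq hle ht]; linarith⟩
  obtain ⟨c, hc, hsc⟩ := hA.exists_dist_le (D := E) le_rfl le_rfl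
    ((hγ.drop ht).isQuasigeodesic le_rfl le_rfl) ⟨q, hqA, by rwa [dist_comm]⟩
    ⟨a, ha, by rw [Nat.add_sub_cancel' ht, dist_comm]; exact haD.trans hDE⟩
    (Nat.sub_le_sub_right hsn t)
  rw [Nat.add_sub_cancel' hts, zero_add] at hsc
  have htri := dist_triangle4 q' (γ t') (γ s) c
  exact ⟨c, hc, by linarith⟩

/-- The radius of a ball meeting all members of a family of pairwise `R`-close stable sets, see
`exists_forall_exists_dist_le_hellyRadius`. -/
def hellyRadius (r : ℝ) (F : ℝ → ℝ → ℝ) (R : ℝ) : ℝ :=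
  let D := projRadius r F R + projRadius r F (projRadius r F R)
  4 * projRadius r F D + F 1 (2 * projRadius r F D) + r

theorem exists_forall_exists_dist_le_hellyRadius {ι : Type*} [Finite ι] [Nonempty ι]
    {A : ι → Set X} (hA : ∀ i, IsStableSet dist r F (A i))
    (hR : ∀ i j, ∃ a ∈ A i, ∃ b ∈ A j, dist a b ≤ R) :
    ∃ y, ∀ i, ∃ a ∈ A i, dist y a ≤ hellyRadius r F R := by
  obtain ⟨o⟩ := ‹Nonempty ι›
  have hne : ∀ i, (A i).Nonempty := fun i => (hR i i).imp fun _ h => h.1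
  have hR0 : 0 ≤ R := let ⟨_, _, _, _, h⟩ := hR o o; dist_nonneg.trans h
  have hR1 : R ≤ projRadius r F R := (hA o).le_projRadius (hne o) hR0
  obtain ⟨p, hp⟩ := hne o
  choose y hyA hy using fun i => exists_isMinOn_dist p (hne i)
  have hyo : ∀ i, ∃ b ∈ A o, dist (y i) b ≤ projRadius r F R := fun i =>
    (hA o).exists_dist_le_projRadius (hA i).isQuasiconvexSet (hR i o)
      ⟨p, hp, by rwa [dist_self]⟩ (hyA i) (hy i)
  obtain ⟨j, hj⟩ := Finite.exists_max fun i => dist p (y i)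
  refine ⟨y j, fun i => ?_⟩
  -- The projection `z` of `y i` to `A j` is close to `A i` and to `A o` as well.
  obtain ⟨z, hz, hz_min⟩ := exists_isMinOn_dist (y i) (hne j)
  obtain ⟨z', hz', hzz'⟩ := (hA i).exists_dist_le_projRadius (hA j).isQuasiconvexSet (hR j i)
    ⟨y i, hyA i, by rwa [dist_self]⟩ hz hz_min
  obtain ⟨w, hw, hzw⟩ := (hA o).exists_dist_le_projRadius (hA j).isQuasiconvexSet
    (let ⟨a, ha, b, hb, hab⟩ := hR j o; ⟨a, ha, b, hb, hab.trans hR1⟩) (hyo i) hz hz_min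
  obtain ⟨n, γ, hγ, rfl, rfl⟩ := exists_isGeodesic p w
  exact (hA i).exists_dist_le_of_dist_le (hA j).isQuasiconvexSet hγ
    ((hA o).isStablePath n γ hγ hp hw) (hyA i) (hy i) (hyA j) (hy j) (hj i) hz'
    ((dist_triangle_left _ _ z).trans (add_le_add hzz' hzw)) hz
    (hzw.trans (le_add_of_nonneg_left (hR0.trans hR1)))

end CoarseHelly

section WordMetric

variable {G : Type*} [Group G] {S : Set G}

lemma exists_list_length_eq_wordLength (hS : Subgroup.closure S = ⊤) (g : G) :
    ∃ l : List G, l.length = wordLength S g ∧ (∀ x ∈ l, x ∈ S ∨ x⁻¹ ∈ S) ∧ l.prod = g := by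
  refine Nat.sInf_mem (s := {n | ∃ l : List G, l.length = n ∧ _ ∧ l.prod = g}) ?_
  have hg : g ∈ (Subgroup.closure S).toSubmonoid := by simp [hS]
  rw [Subgroup.closure_toSubmonoid] at hg
  obtain ⟨l, hl, hprod⟩ := Submonoid.exists_list_of_mem_closure hg
  exact ⟨l.length, l, rfl, hl, hprod⟩

lemma wordLength_prod_le {l : List G} (hl : ∀ x ∈ l, x ∈ S ∨ x⁻¹ ∈ S) :
    wordLength S l.prod ≤ l.length :=
  Nat.sInf_le ⟨l, rfl, hl, rfl⟩

lemma wordLength_one : wordLength S (1 : G) = 0 :=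
  Nat.le_zero.1 (wordLength_prod_le (l := []) (by simp))

lemma wordLength_mul_le (hS : Subgroup.closure S = ⊤) (g h : G) :
    wordLength S (g * h) ≤ wordLength S g + wordLength S h := by
  obtain ⟨l, hlen, hl, rfl⟩ := exists_list_length_eq_wordLength hS g
  obtain ⟨l', hlen', hl', rfl⟩ := exists_list_length_eq_wordLength hS h
  rw [← hlen, ← hlen', ← List.length_append, ← List.prod_append]
  exact wordLength_prod_le fun x hx => (List.mem_append.1 hx).elim (hl x) (hl' x)

lemma wordLength_inv (g : G) : wordLength S g⁻¹ = wordLength S g := by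
  have hrev : ∀ (h : G) (n : ℕ),
      (∃ l : List G, l.length = n ∧ (∀ x ∈ l, x ∈ S ∨ x⁻¹ ∈ S) ∧ l.prod = h) →
      ∃ l : List G, l.length = n ∧ (∀ x ∈ l, x ∈ S ∨ x⁻¹ ∈ S) ∧ l.prod = h⁻¹ := by
    rintro _ _ ⟨l, rfl, hl, rfl⟩
    refine ⟨(l.map (·⁻¹)).reverse, by simp, fun x hx => ?_, (List.prod_inv_reverse l).symm⟩
    obtain ⟨y, hy, rfl⟩ := List.mem_map.1 (List.mem_reverse.1 hx)
    simpa [or_comm] using hl y hy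
  exact congrArg sInf (Set.ext fun n => ⟨fun h => by simpa using hrev g⁻¹ n h, hrev g n⟩)

lemma wordDist_mul_left (g x y : G) : wordDist S (g * x) (g * y) = wordDist S x y := by
  simp [wordDist, mul_assoc]

/-- The word metric as a `PseudoMetricSpace` structure; it is not an instance, since it depends on
the generating set. -/
noncomputable abbrev wordPseudoMetricSpace (hS : Subgroup.closure S = ⊤) :
    PseudoMetricSpace G where
  dist := wordDist S
  dist_self x := by simp [wordDist, wordLength_one]
  dist_comm x y := by simp [wordDist, ← wordLength_inv (x⁻¹ * y)]
  dist_triangle x y z := by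
    have h := wordLength_mul_le hS (x⁻¹ * y) (y⁻¹ * z)
    rw [mul_assoc, mul_inv_cancel_left] at h
    simp only [wordDist]
    exact_mod_cast h

lemma exists_isGeodesic_wordDist (hS : Subgroup.closure S = ⊤) (x y : G) :
    ∃ (n : ℕ) (γ : ℕ → G), IsGeodesic (wordDist S) n γ ∧ γ 0 = x ∧ γ n = y := by
  let := wordPseudoMetricSpace hS
  obtain ⟨l, hlen, hl, hprod⟩ := exists_list_length_eq_wordLength hS (x⁻¹ * y)
  have hend : x * (l.take l.length).prod = y := by rw [List.take_length, hprod, mul_inv_cancel_left]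
  refine ⟨l.length, fun i => x * (l.take i).prod,
    isGeodesic_of_dist_succ_le_one (fun i hi => ?_) ?_, by simp, hend⟩
  · have hletter := wordLength_prod_le (S := S) (l := [l[i]])
      (by simpa using hl _ (l.getElem_mem hi))
    change wordDist S _ _ ≤ 1
    rw [wordDist_mul_left, wordDist, List.prod_take_succ l i hi, inv_mul_cancel_left]
    simpa using hletter
  · change wordDist S _ _ = _
    rw [hend, hlen]
    simp [wordDist]

lemma discreteGeodesicSpace_wordPseudoMetricSpace (hS : Subgroup.closure S = ⊤) :
    @DiscreteGeodesicSpace G (wordPseudoMetricSpace hS) :=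
  @DiscreteGeodesicSpace.mk G (wordPseudoMetricSpace hS) (exists_isGeodesic_wordDist hS)

lemma finite_setOf_wordLength_le (hfin : S.Finite) (hS : Subgroup.closure S = ⊤) (n : ℕ) :
    {g : G | wordLength S g ≤ n}.Finite := by
  have : Finite (S ∪ S⁻¹ : Set G) := hfin.union hfin.inv
  refine ((List.finite_length_le (S ∪ S⁻¹ : Set G) n).image
    fun l => (l.map Subtype.val).prod).subset fun g hg => ?_
  obtain ⟨l, hlen, hl, rfl⟩ := exists_list_length_eq_wordLength hS g
  lift l to List (S ∪ S⁻¹ : Set G) using hl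
  exact ⟨l, by simpa using hlen.trans_le hg, rfl⟩

lemma finite_setOf_wordDist_le (hfin : S.Finite) (hS : Subgroup.closure S = ⊤) (x : G) (C : ℝ) :
    {g : G | wordDist S x g ≤ C}.Finite :=
  ((finite_setOf_wordLength_le hfin hS ⌊C⌋₊).preimage (mul_right_injective x⁻¹).injOn).subset
    fun _ hg => Nat.le_floor hg

end WordMetric

section Cosets

variable {G : Type*} [Group G] {S : Set G}

lemma IsStableSubgroup.exists_isStableSet {H : Subgroup G} (hS : Subgroup.closure S = ⊤)
    (hH : IsStableSubgroup S H) :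
    ∃ (r : ℝ) (F : ℝ → ℝ → ℝ), IsStableSet (wordDist S) r F (H : Set G) := by
  let := wordPseudoMetricSpace hS
  obtain ⟨f, T, -, hT, ⟨μ, c, hμ, -, hqi⟩, hst⟩ := hH
  refine ⟨_, _, isStableSet_of_forall_exists_isStablePath (K := μ) (ε := c) (F := f)
    (zero_lt_one.trans_le hμ) fun a ha b hb => ?_⟩
  obtain ⟨n, γ, hγ, h0, hn⟩ := exists_isGeodesic_wordDist hT ⟨a, ha⟩ ⟨b, hb⟩
  exact ⟨n, fun i => γ i, by simp [h0], by simp [hn], fun i _ => (γ i).2,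
    fun i j hi hj => hγ i j hi hj ▸ hqi (γ i) (γ j), (hst n γ hγ).2⟩

lemma exists_forall_isStableSet_smul {ι : Type*} [Finite ι] {H : ι → Subgroup G}
    (hS : Subgroup.closure S = ⊤) (hH : ∀ i, IsStableSubgroup S (H i)) :
    ∃ (r : ℝ) (F : ℝ → ℝ → ℝ), ∀ (i : ι) (g : G),
      IsStableSet (wordDist S) r F (g • (H i : Set G)) := by
  choose r F hrF using fun i => (hH i).exists_isStableSet hS
  exact ⟨⨆ i, r i, fun K ε => ⨆ i, F i K ε, fun i g => ((hrF i).smul wordDist_mul_left g).mono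
    (Finite.le_ciSup r i) fun K ε => Finite.le_ciSup (fun i => F i K ε) i⟩

lemma mul_mem_smul_of_mem_conjSub {H : Subgroup G} {g x : G} (hx : x ∈ conjSub g H) :
    x * g ∈ g • (H : Set G) := by
  obtain ⟨h, hh, rfl⟩ := hx
  exact ⟨h, hh, by simp⟩

lemma infinite_setOf_wordDist_le_of_infinite_inter_conjSub {H₁ H₂ : Subgroup G} {g₁ g₂ : G}
    (h : ((conjSub g₁ H₁ : Set G) ∩ (conjSub g₂ H₂ : Set G)).Infinite) :
    {a ∈ g₁ • (H₁ : Set G) | ∃ b ∈ g₂ • (H₂ : Set G), wordDist S a b ≤ wordDist S g₁ g₂}.Infinite :=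
  (h.image (mul_left_injective g₁).injOn).mono <| Set.image_subset_iff.2 fun x hx =>
    ⟨mul_mem_smul_of_mem_conjSub hx.1, x * g₂, mul_mem_smul_of_mem_conjSub hx.2,
      (wordDist_mul_left x g₁ g₂).le⟩

lemma exists_forall_cosets_meet_ball {ι : Type*} [Finite ι] {H : ι → Subgroup G} (hfin : S.Finite)
    (hS : Subgroup.closure S = ⊤) (hH : ∀ i, IsStableSubgroup S (H i)) :
    ∃ C : ℝ, ∀ (k : ℕ) (σ : Fin k → ι) (g : Fin k → G),
      (∀ i j, i ≠ j →
        ((conjSub (g i) (H (σ i)) : Set G) ∩ (conjSub (g j) (H (σ j)) : Set G)).Infinite) →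
      ∃ y, ∀ i, ∃ a ∈ g i • (H (σ i) : Set G), wordDist S y a ≤ C := by
  let := wordPseudoMetricSpace hS
  have := discreteGeodesicSpace_wordPseudoMetricSpace hS
  obtain ⟨r, F, hrF⟩ := exists_forall_isStableSet_smul hS hH
  refine ⟨hellyRadius r F (F 3 (4 * r) + r), fun k σ g hinf => ?_⟩
  rcases isEmpty_or_nonempty (Fin k) with _ | _
  · exact ⟨1, isEmptyElim⟩
  have hA : ∀ i, IsStableSet dist r F (g i • (H (σ i) : Set G)) := fun i => hrF (σ i) (g i)
  refine exists_forall_exists_dist_le_hellyRadius hA fun i j => ?_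
  rcases eq_or_ne i j with rfl | hij
  · have hne : (g i • (H (σ i) : Set G)).Nonempty := (OneMemClass.coe_nonempty (H (σ i))).smul_set
    have hr := (hA i).radius_nonneg hne
    have hF := (hA i).nonneg hne (K := 3) (ε := 4 * r) (by norm_num) (by positivity)
    obtain ⟨a, ha⟩ := hne
    exact ⟨a, ha, a, ha, by rw [dist_self]; positivity⟩
  · refine (hA i).exists_dist_le_of_not_isBounded (ρ := wordDist S (g i) (g j))
      (hA j).isQuasiconvexSet fun hbdd =>
        infinite_setOf_wordDist_le_of_infinite_inter_conjSub (S := S) (hinf i j hij) ?_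
    obtain ⟨C, hC⟩ := (Metric.isBounded_iff_subset_closedBall 1).1 hbdd
    exact (finite_setOf_wordDist_le hfin hS 1 C).subset fun a ha =>
      Metric.mem_closedBall'.1 (hC ha)

/-- A coset `g k • H (σ k)` is determined by `σ k` and any one of its points in `y • B`. -/
lemma card_le_card_mul_ncard_of_cosets_inter_nonempty {ι κ : Type*} [Finite ι]
    {H : ι → Subgroup G} {σ : κ → ι} {g : κ → G} {B : Set G} (hB : B.Finite) (y : G)
    (hne : Pairwise fun i j => g i • (H (σ i) : Set G) ≠ g j • (H (σ j) : Set G))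
    (hmeet : ∀ k, (g k • (H (σ k) : Set G) ∩ y • B).Nonempty) :
    Nat.card κ ≤ Nat.card ι * B.ncard := by
  choose a haH haB using hmeet
  have hcoset : ∀ k, g k • (H (σ k) : Set G) = a k • (H (σ k) : Set G) := fun k =>
    (leftCoset_eq_iff _).2 ((mem_leftCoset_iff _).1 (haH k))
  have hinj : Function.Injective fun k => (σ k, (⟨a k, haB k⟩ : (y • B : Set G))) := by
    intro k k' hkk'
    obtain ⟨hσ, ha⟩ : σ k = σ k' ∧ a k = a k' := by simpa using hkk'
    exact hne.eq (not_not.2 (by rw [hcoset, hcoset, hσ, ha]))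
  have : Finite (y • B : Set G) := hB.smul_set
  calc Nat.card κ ≤ Nat.card (ι × (y • B : Set G)) := Nat.card_le_card_of_injective _ hinj
    _ = Nat.card ι * B.ncard := by
      rw [Nat.card_prod, Nat.card_coe_set_eq, Set.ncard_smul_set]

end Cosets

/-- **Finite width.** A finite collection of stable subgroups has finite width: there is `n`
bounding the cardinality of any collection of pairwise distinct cosets whose corresponding
conjugates pairwise intersect in infinite subgroups. -/
theorem finite_width_of_stable {G : Type*} [Group G] (S : Set G) (hSfin : S.Finite)
    (hSgen : Subgroup.closure S = ⊤) (l : ℕ) (H : Fin l → Subgroup G)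
    (hstable : ∀ i, IsStableSubgroup S (H i)) :
    ∃ n : ℕ, ∀ (k : ℕ) (σ : Fin k → Fin l) (g : Fin k → G),
      (∀ i j : Fin k, i ≠ j → g i • (H (σ i) : Set G) ≠ g j • (H (σ j) : Set G)) →
      (∀ i j : Fin k, i ≠ j →
        ((conjSub (g i) (H (σ i)) : Set G) ∩ (conjSub (g j) (H (σ j)) : Set G)).Infinite) →
      k ≤ n := by
  obtain ⟨C, hC⟩ := exists_forall_cosets_meet_ball hSfin hSgen hstable
  refine ⟨l * {x : G | wordDist S 1 x ≤ C}.ncard, fun k σ g hne hinf => ?_⟩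
  obtain ⟨y, hy⟩ := hC k σ g hinf
  have hmeet : ∀ i, (g i • (H (σ i) : Set G) ∩ y • {x : G | wordDist S 1 x ≤ C}).Nonempty := by
    intro i
    obtain ⟨a, ha, hya⟩ := hy i
    exact ⟨a, ha, y⁻¹ * a, by simpa [wordDist] using hya, by simp⟩
  simpa using card_le_card_mul_ncard_of_cosets_inter_nonempty
    (finite_setOf_wordDist_le hSfin hSgen 1 C) y (fun i j => hne i j) hmeet
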